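/- In B₄, for all integers k, k′ and every integer l ≥ 0, the braids β_{k,l} and β_{k′,l} are equal, where β_{k,l} := (β⁻ᵏβ₁βᵏ)·(β⁻ᵏβ₂βᵏ)·(β⁻ᵏβ₃βᵏ)·β₂ˡ. -/

import Mathlib

/-!
Conjugating the three factors of `βkl k l` by `β ^ k` conjugates their product, so it suffices
that `β = σ₃` commutes with `β₁ * β₂ * β₃`. Writing `a, b, c` for the Artin generators,
`β₁ β₂ β₃ = c⁻² a⁻¹ (b a c² b c² a b) a⁻¹ c⁻²`, and `a`, `c` commute, so only the middle word
matters. The braid relations rewrite it as `(b a c b) c (b c a b)`. Since `b a c b = b c a b`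
exchanges `a` and `c` under conjugation, moving `c` from left to right through this word turns it
into `a`, which passes the central `c`, and then back into `c`.
-/

/-- The braid relations for the braid group B₄ on 4 strands, with Artin generators
σ₁ = of 0, σ₂ = of 1, σ₃ = of 2. -/
def braidRels4 : Set (FreeGroup (Fin 3)) :=
  { FreeGroup.of 0 * FreeGroup.of 1 * FreeGroup.of 0 *
      (FreeGroup.of 1 * FreeGroup.of 0 * FreeGroup.of 1)⁻¹,
    FreeGroup.of 1 * FreeGroup.of 2 * FreeGroup.of 1 *
      (FreeGroup.of 2 * FreeGroup.of 1 * FreeGroup.of 2)⁻¹,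
    FreeGroup.of 0 * FreeGroup.of 2 * (FreeGroup.of 2 * FreeGroup.of 0)⁻¹ }

/-- The braid group on 4 strands, as a presented group. -/
abbrev BraidGroup4 : Type := PresentedGroup braidRels4

/-- The Artin generators σ₁, σ₂, σ₃ of B₄. -/
def σ (i : Fin 3) : BraidGroup4 := PresentedGroup.of i

/-- β₁ = σ₃⁻²σ₁⁻¹σ₂σ₁σ₃². -/
def β₁ : BraidGroup4 := ((σ 2) ^ 2)⁻¹ * (σ 0)⁻¹ * σ 1 * σ 0 * (σ 2) ^ 2

/-- β₂ = σ₂. -/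
def β₂ : BraidGroup4 := σ 1

/-- β₃ = σ₃²σ₁σ₂σ₁⁻¹σ₃⁻². -/
def β₃ : BraidGroup4 := (σ 2) ^ 2 * σ 0 * σ 1 * (σ 0)⁻¹ * ((σ 2) ^ 2)⁻¹

/-- β = σ₃. -/
def β : BraidGroup4 := σ 2

/-- The Baykur–Van Horn-Morris braids `β_{k,l} = (β⁻ᵏβ₁βᵏ)(β⁻ᵏβ₂βᵏ)(β⁻ᵏβ₃βᵏ)β₂ˡ`. -/
def βkl (k : ℤ) (l : ℕ) : BraidGroup4 :=
  (β ^ (-k) * β₁ * β ^ k) * (β ^ (-k) * β₂ * β ^ k) * (β ^ (-k) * β₃ * β ^ k) * β₂ ^ l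

theorem σ_braid_zero_one : σ 0 * σ 1 * σ 0 = σ 1 * σ 0 * σ 1 :=
  PresentedGroup.mk_eq_mk_of_mul_inv_mem (rels := braidRels4) (by simp [braidRels4])

theorem σ_braid_one_two : σ 1 * σ 2 * σ 1 = σ 2 * σ 1 * σ 2 :=
  PresentedGroup.mk_eq_mk_of_mul_inv_mem (rels := braidRels4) (by simp [braidRels4])

theorem σ_comm_zero_two : σ 0 * σ 2 = σ 2 * σ 0 :=
  PresentedGroup.mk_eq_mk_of_mul_inv_mem (rels := braidRels4) (by simp [braidRels4])

section Words

variable {G : Type*} [Group G] {a b c : G}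

/-- The half-exchange word `b a c b` carries `a` on its right to `c` on its left. -/
theorem exchange_word (h₁ : a * b * a = b * a * b) (h₂ : b * c * b = c * b * c)
    (h₃ : a * c = c * a) : c * (b * a * c * b) = b * a * c * b * a := by
  calc c * (b * a * c * b) = c * b * (a * c) * b := by group
    _ = (c * b * c) * a * b := by rw [h₃]; group
    _ = b * c * (b * a * b) := by rw [← h₂]; group
    _ = b * (c * a) * b * a := by rw [← h₁]; group
    _ = b * a * c * b * a := by rw [← h₃]; group

theorem middle_word_eq (h₂ : b * c * b = c * b * c) :
    b * a * c ^ 2 * b * c ^ 2 * a * b = (b * a * c * b) * c * (b * c * a * b) := by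
  calc b * a * c ^ 2 * b * c ^ 2 * a * b = b * a * c * (c * b * c) * c * a * b := by
        simp only [pow_two, mul_assoc]
    _ = (b * a * c * b) * c * (b * c * a * b) := by rw [← h₂]; simp only [mul_assoc]

theorem commute_middle_word (h₁ : a * b * a = b * a * b) (h₂ : b * c * b = c * b * c)
    (h₃ : a * c = c * a) : Commute c (b * a * c ^ 2 * b * c ^ 2 * a * b) := by
  have hx := exchange_word h₁ h₂ h₃
  -- The same exchange with the roles of `a` and `c` swapped.
  have hy := exchange_word h₂.symm h₁.symm h₃.symm
  rw [middle_word_eq h₂]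
  calc c * (b * a * c * b * c * (b * c * a * b))
      = c * (b * a * c * b) * c * (b * c * a * b) := by simp only [mul_assoc]
    _ = b * a * c * b * (a * c) * (b * c * a * b) := by rw [hx]; simp only [mul_assoc]
    _ = b * a * c * b * c * (a * (b * c * a * b)) := by rw [h₃]; simp only [mul_assoc]
    _ = b * a * c * b * c * (b * c * a * b) * c := by rw [hy]; simp only [mul_assoc]

end Words

/-- `β` lies in the centralizer of `β₁ * β₂ * β₃`. -/
theorem commute_β_prod : Commute β (β₁ * β₂ * β₃) := by
  have hm := commute_middle_word σ_braid_zero_one σ_braid_one_two σ_comm_zero_two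
  have ha : Commute (σ 2) (σ 0)⁻¹ := Commute.inv_right σ_comm_zero_two.symm
  have hc : Commute (σ 2) ((σ 2) ^ 2)⁻¹ := ((Commute.refl (σ 2)).pow_right 2).inv_right
  have hp : β₁ * β₂ * β₃ = ((σ 2) ^ 2)⁻¹ * (σ 0)⁻¹ *
      (σ 1 * σ 0 * σ 2 ^ 2 * σ 1 * σ 2 ^ 2 * σ 0 * σ 1) * (σ 0)⁻¹ * ((σ 2) ^ 2)⁻¹ := by
    simp only [β₁, β₂, β₃, mul_assoc]
  rw [hp]
  exact (((hc.mul_right ha).mul_right hm).mul_right ha).mul_right hc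

theorem βkl_eq (k : ℤ) (l : ℕ) : βkl k l = β₁ * β₂ * β₃ * β₂ ^ l := by
  have h := (commute_β_prod.zpow_left k).eq
  calc βkl k l = β ^ (-k) * (β₁ * β₂ * β₃ * β ^ k) * β₂ ^ l := by
        simp only [βkl, zpow_neg]; group
    _ = β₁ * β₂ * β₃ * β₂ ^ l := by rw [← h, zpow_neg, inv_mul_cancel_left]

/-- The braid `β_{k,l}` does not depend on `k`. -/
theorem βkl_independent_of_k : ∀ (k k' : ℤ) (l : ℕ), βkl k l = βkl k' l := by
  intro k k' l
  rw [βkl_eq, βkl_eq]
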